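/- Let G be a subgroup of S_n with block partition 𝓑, let Ψ be an order-automorphism of U_{G⋌𝓑}, and let σ := Ψ|_T. Then for every μ ∈ ⋃_{B∈𝓑} G|_B, Ψ maps D^μ onto D^{σ∘μ}, and more precisely Ψ(j,μ) = (j, σ∘μ) for every j ∈ dom(μ). -/

import Mathlib

/-!
Outside the antichain `T`, which `Ψ` preserves, `UPt.rank` is the height in the order, so `Ψ`
preserves it. Hence `Ψ` permutes the `u_i` by some `p`, and it permutes the cells. The `ℓ_i` are the
elements of rank `0` below some `u_k`, so `Ψ` permutes them by some `q`. Since `ℓ_j < u_i` means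
that `j` is `i` or its successor, `p ≤ q` pointwise and thus `p = q`; then `p` is strictly monotone,
so it is the identity and `Ψ` fixes every `u_i`.

As `u_j` is the only `u_i` below `(j, μ)`, the image of `(j, μ)` is `(j, κ)` for some `κ`, and
`dom κ = dom μ` because distinct blocks are disjoint. A priori `κ` depends on `j`. Write `μ = θ|_B`;
then `Ψ θ = θ'` for some `θ' ∈ G`, and `θ < (j, μ)` gives `θ' < (j, κ)`, so `κ = θ'|_B` for every
`j`. Finally `(j, μ) < μ(j)` gives `κ(j) = σ(μ(j))`.
-/

/-- The set of restrictions `θ|_B` (as functions `B → Fin n`) of elements `θ ∈ G`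
to blocks `B ∈ 𝓑`, i.e. `⋃_{B ∈ 𝓑} G|_B`. -/
def Restr (n : ℕ) (G : Subgroup (Equiv.Perm (Fin n))) (𝓑 : Set (Set (Fin n))) :
    Set ((B : Set (Fin n)) × (B → Fin n)) :=
  { p | p.1 ∈ 𝓑 ∧ ∃ θ ∈ G, p.2 = fun x => θ x.1 }

/-- The underlying set of the ordered set `U_{G⋌𝓑}`:
the fence `F = {ℓ_1,u_1,…,ℓ_n,u_n}` (constructors `low`, `up`), the copy of `G`
(constructor `grp`), the sets `D^μ = dom(μ) × {μ}` (constructor `cell`), and the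
copy of `T = {1,…,n}` (constructor `pt`). -/
inductive UPt (n : ℕ) (G : Subgroup (Equiv.Perm (Fin n))) (𝓑 : Set (Set (Fin n))) where
  | low : Fin n → UPt n G 𝓑
  | up : Fin n → UPt n G 𝓑
  | grp : G → UPt n G 𝓑
  | cell : (μ : Restr n G 𝓑) → (j : μ.1.1) → UPt n G 𝓑
  | pt : Fin n → UPt n G 𝓑

/-- The generating strict comparabilities of `U_{G⋌𝓑}`:
`ℓ_i < u_i`, `ℓ_{i+1} < u_i`, `u_j < (j,μ)`, `(j,μ) < μ(j)`, and `θ < (j, θ|_B)`. -/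
inductive UStep (n : ℕ) (G : Subgroup (Equiv.Perm (Fin n))) (𝓑 : Set (Set (Fin n))) :
    UPt n G 𝓑 → UPt n G 𝓑 → Prop where
  | fence_eq (i : Fin n) : UStep n G 𝓑 (.low i) (.up i)
  | fence_succ (i j : Fin n) (h : (j : ℕ) = (i : ℕ) + 1) : UStep n G 𝓑 (.low j) (.up i)
  | up_cell (μ : Restr n G 𝓑) (j : μ.1.1) : UStep n G 𝓑 (.up j.1) (.cell μ j)
  | cell_pt (μ : Restr n G 𝓑) (j : μ.1.1) : UStep n G 𝓑 (.cell μ j) (.pt (μ.1.2 j))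
  | grp_cell (θ : G) (μ : Restr n G 𝓑) (j : μ.1.1)
      (h : ∀ x : μ.1.1, μ.1.2 x = (θ : Equiv.Perm (Fin n)) x.1) :
      UStep n G 𝓑 (.grp θ) (.cell μ j)

/-- Rank function used to prove antisymmetry of the generated order. -/
def UPt.rank {n : ℕ} {G : Subgroup (Equiv.Perm (Fin n))} {𝓑 : Set (Set (Fin n))} :
    UPt n G 𝓑 → ℕ
  | .low _ => 0
  | .grp _ => 0
  | .up _ => 1
  | .cell _ _ => 2
  | .pt _ => 3

theorem UStep.rank_lt {n : ℕ} {G : Subgroup (Equiv.Perm (Fin n))} {𝓑 : Set (Set (Fin n))}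
    {x y : UPt n G 𝓑} (h : UStep n G 𝓑 x y) : x.rank < y.rank := by
  cases h <;> simp [UPt.rank]

/-- The order of `U_{G⋌𝓑}`: the reflexive-transitive closure of the generating
comparabilities. -/
instance UPt.instPartialOrder (n : ℕ) (G : Subgroup (Equiv.Perm (Fin n)))
    (𝓑 : Set (Set (Fin n))) : PartialOrder (UPt n G 𝓑) where
  le := Relation.ReflTransGen (UStep n G 𝓑)
  le_refl _ := Relation.ReflTransGen.refl
  le_trans _ _ _ := Relation.ReflTransGen.trans
  le_antisymm a b hab hba := by
    have mono : ∀ {x y : UPt n G 𝓑}, Relation.ReflTransGen (UStep n G 𝓑) x y →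
        x.rank ≤ y.rank := by
      intro x y h
      induction h with
      | refl => exact le_rfl
      | tail _ h2 ih => exact ih.trans h2.rank_lt.le
    rcases hab.cases_head with h | ⟨c, hc, hcb⟩
    · exact h
    rcases hba.cases_head with h | ⟨d, hd, hda⟩
    · exact h.symm
    have h1 := hc.rank_lt
    have h2 := mono hcb
    have h3 := hd.rank_lt
    have h4 := mono hda
    omega

/-- `B` is a block for `G`: for every `σ ∈ G`, `σ[B] ∩ B ≠ ∅` implies `σ[B] = B`. -/
def IsBlockOf (n : ℕ) (G : Subgroup (Equiv.Perm (Fin n))) (B : Set (Fin n)) : Prop :=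
  ∀ σ ∈ G, ((σ : Equiv.Perm (Fin n)) '' B ∩ B).Nonempty → (σ : Equiv.Perm (Fin n)) '' B = B

/-- A block partition `𝓑 = ⋃_{j=1}^ℓ G·B_j` for `G` with orbit cut `{B_1,…,B_ℓ}`
(the `B_j` are the `cut j`): the `B_j` are nonempty blocks, the family of all images
`σ[B_i]` (`σ ∈ G`) partitions `{1,…,n}`, and distinct members of the orbit cut lie in
distinct `G`-orbits of blocks. -/
structure BlockPartition (n : ℕ) (G : Subgroup (Equiv.Perm (Fin n))) where
  ℓ : ℕ
  cut : Fin ℓ → Set (Fin n)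
  nonempty_cut : ∀ i, (cut i).Nonempty
  isBlock_cut : ∀ i, IsBlockOf n G (cut i)
  partitions : ∀ x : Fin n,
    ∃! C : Set (Fin n), (∃ i, ∃ σ ∈ G, (σ : Equiv.Perm (Fin n)) '' cut i = C) ∧ x ∈ C
  cut_distinct_orbits : ∀ i j : Fin ℓ, ∀ σ ∈ G,
    (σ : Equiv.Perm (Fin n)) '' cut i = cut j → i = j

/-- The block partition `𝓑 = ⋃_{j=1}^ℓ G·B_j` as a set of subsets of `{1,…,n}`. -/
def BlockPartition.blocks {n : ℕ} {G : Subgroup (Equiv.Perm (Fin n))}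
    (P : BlockPartition n G) : Set (Set (Fin n)) :=
  { C | ∃ i, ∃ σ ∈ G, (σ : Equiv.Perm (Fin n)) '' P.cut i = C }

/-- Composition `σ ∘ μ` of a restriction `μ = θ|_B` with `σ ∈ G`; this is the
restriction `(σθ)|_B`. -/
def Restr.comp {n : ℕ} {G : Subgroup (Equiv.Perm (Fin n))} {𝓑 : Set (Set (Fin n))}
    (σ : G) (μ : Restr n G 𝓑) : Restr n G 𝓑 :=
  ⟨⟨μ.1.1, fun x => (σ : Equiv.Perm (Fin n)) (μ.1.2 x)⟩, by
    obtain ⟨hB, θ, hθ, hf⟩ := μ.2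
    refine ⟨hB, (σ : Equiv.Perm (Fin n)) * θ, mul_mem σ.2 hθ, ?_⟩
    funext x
    simp [hf]⟩

theorem eq_of_surjective_of_injective_of_le {α β : Type*} [PartialOrder β] [WellFoundedGT β]
    {p q : α → β} (hp : Function.Surjective p) (hq : Function.Injective q) (h : p ≤ q) :
    p = q := by
  funext a
  induction hb : p a using WellFoundedGT.induction generalizing a with
  | ind b ih =>
    by_contra hne
    obtain ⟨c, hc⟩ := hp (q a)
    have hlt : b < p c := hc ▸ lt_of_le_of_ne (hb ▸ h a) hne
    have hac : a = c := hq (hc.symm.trans (ih (p c) hlt c rfl))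
    exact hlt.ne (hac ▸ hb.symm)

/-- Rigidity of a fence, where `p` and `q` give the action of an automorphism on the indices of the
upper and of the lower elements. -/
theorem eq_id_of_wcovBy {α : Type*} [LinearOrder α] [Finite α] {p q : α → α}
    (hp : Function.Injective p) (hq : Function.Injective q) (h : ∀ a b, a ⩿ b → p a ⩿ q b) :
    p = id := by
  obtain rfl : p = q := eq_of_surjective_of_injective_of_le
    (Finite.surjective_of_injective hp) hq fun a => (h a a .rfl).le
  have := Fintype.ofFinite α
  have := Fintype.toLocallyFiniteOrder (α := α)
  have hmono : StrictMono p := (strictMono_iff_forall_covBy p).mpr fun a b hab =>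
    (h a b hab.wcovBy).le.lt_of_ne (hp.ne hab.ne)
  exact funext fun a => le_antisymm hmono.apply_le hmono.le_apply

theorem BlockPartition.pairwiseDisjoint_blocks {n : ℕ} {G : Subgroup (Equiv.Perm (Fin n))}
    (P : BlockPartition n G) : P.blocks.PairwiseDisjoint id := fun _ hB _ hC hne =>
  Set.disjoint_left.mpr fun x hxB hxC => hne ((P.partitions x).unique ⟨hB, hxB⟩ ⟨hC, hxC⟩)

section

variable {n : ℕ} {G : Subgroup (Equiv.Perm (Fin n))} {𝓑 : Set (Set (Fin n))}

namespace Restr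

/-- The restriction `θ|_B` of `θ ∈ G` to a block `B ∈ 𝓑`. -/
abbrev restrict (θ : G) {B : Set (Fin n)} (hB : B ∈ 𝓑) : Restr n G 𝓑 :=
  ⟨⟨B, fun x => θ.1 x.1⟩, hB, θ.1, θ.2, rfl⟩

theorem exists_forall_eq (μ : Restr n G 𝓑) : ∃ θ : G, ∀ x : μ.1.1, μ.1.2 x = θ.1 x.1 :=
  let ⟨θ, hθ, h⟩ := μ.2.2
  ⟨⟨θ, hθ⟩, congrFun h⟩

end Restr

namespace UPt

theorem le_of_step {x y : UPt n G 𝓑} (h : UStep n G 𝓑 x y) : x ≤ y :=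
  Relation.ReflTransGen.single h

theorem eq_or_exists_step {x y : UPt n G 𝓑} (h : x ≤ y) : x = y ∨ ∃ c, x ≤ c ∧ UStep n G 𝓑 c y :=
  (Relation.ReflTransGen.cases_tail h).imp_left Eq.symm

theorem rank_mono : Monotone (rank : UPt n G 𝓑 → ℕ) := by
  intro x y h
  induction h with
  | refl => exact le_rfl
  | tail _ hstep ih => exact ih.trans hstep.rank_lt.le

theorem rank_strictMono : StrictMono (rank : UPt n G 𝓑 → ℕ) := by
  intro x y h
  obtain rfl | ⟨c, hxc, hcy⟩ := eq_or_exists_step h.le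
  · exact absurd h (lt_irrefl x)
  · exact (rank_mono hxc).trans_lt hcy.rank_lt

theorem step_of_le_of_rank_eq {x y : UPt n G 𝓑} (h : x ≤ y) (hr : y.rank = x.rank + 1) :
    UStep n G 𝓑 x y := by
  obtain rfl | ⟨c, hxc, hcy⟩ := eq_or_exists_step h
  · omega
  · have := hcy.rank_lt
    obtain rfl : x = c := by
      by_contra hne
      have := rank_strictMono (hxc.lt_of_ne hne)
      omega
    exact hcy

theorem low_le_up_iff {i j : Fin n} : (low j : UPt n G 𝓑) ≤ up i ↔ i ⩿ j := by
  rw [wcovBy_iff_eq_or_covBy, Fin.covBy_iff, Nat.covBy_iff_add_one_eq]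
  constructor
  · intro h
    cases step_of_le_of_rank_eq h rfl with
    | fence_eq => exact .inl rfl
    | fence_succ _ _ hj => exact .inr hj.symm
  · rintro (rfl | hj)
    · exact le_of_step (.fence_eq i)
    · exact le_of_step (.fence_succ i j hj.symm)

theorem not_grp_le_up {θ : G} {i : Fin n} : ¬ (grp θ : UPt n G 𝓑) ≤ up i :=
  fun h => nomatch step_of_le_of_rank_eq h rfl

theorem up_le_cell_iff {i : Fin n} {μ : Restr n G 𝓑} {j : μ.1.1} :
    (up i : UPt n G 𝓑) ≤ cell μ j ↔ i = j.1 := by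
  constructor
  · intro h
    cases step_of_le_of_rank_eq h rfl with
    | up_cell => rfl
  · rintro rfl
    exact le_of_step (.up_cell μ j)

theorem cell_le_pt_iff {μ : Restr n G 𝓑} {j : μ.1.1} {t : Fin n} :
    (cell μ j : UPt n G 𝓑) ≤ pt t ↔ μ.1.2 j = t := by
  constructor
  · intro h
    cases step_of_le_of_rank_eq h rfl with
    | cell_pt => rfl
  · rintro rfl
    exact le_of_step (.cell_pt μ j)

theorem grp_le_cell_iff {θ : G} {μ : Restr n G 𝓑} {j : μ.1.1} :
    (grp θ : UPt n G 𝓑) ≤ cell μ j ↔ ∀ x : μ.1.1, μ.1.2 x = θ.1 x.1 := by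
  refine ⟨fun h => ?_, fun h => le_of_step (.grp_cell θ μ j h)⟩
  obtain h | ⟨c, hle, hstep⟩ := eq_or_exists_step h
  · cases h
  · cases hstep with
    | up_cell => exact absurd hle not_grp_le_up
    | grp_cell θ' _ _ hθ' =>
      obtain h | ⟨_, _, hstep⟩ := eq_or_exists_step hle
      · cases h
        exact hθ'
      · cases hstep

/-- An element of `T` is excluded because it has height `0` if no block contains it. -/
theorem height_eq_rank {x : UPt n G 𝓑} (hx : x ∉ Set.range pt) : Order.height x = x.rank := by
  have height_succ {y z : UPt n G 𝓑} (h : UStep n G 𝓑 y z) : Order.height y + 1 ≤ Order.height z :=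
    Order.height_add_one_le ((le_of_step h).lt_of_ne fun e => (e ▸ h.rank_lt).false)
  have one_le_height_up (i : Fin n) : 1 ≤ Order.height (up i : UPt n G 𝓑) :=
    le_add_self.trans (height_succ (.fence_eq i))
  refine le_antisymm ?_ ?_
  · simpa using Order.height_le_height_apply_of_strictMono _ rank_strictMono x
  · cases x with
    | low i => exact zero_le
    | grp θ => exact zero_le
    | up i => exact one_le_height_up i
    | cell μ j =>
      exact (add_le_add_left (one_le_height_up j.1) 1).trans (height_succ (.up_cell μ j))
    | pt t => exact absurd ⟨t, rfl⟩ hx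

section Automorphism

variable {Ψ : UPt n G 𝓑 ≃o UPt n G 𝓑}

theorem rank_map (hT : Set.MapsTo Ψ (Set.range pt) (Set.range pt)) (x : UPt n G 𝓑) :
    (Ψ x).rank = x.rank := by
  have hbij : Set.BijOn Ψ (Set.range pt) (Set.range pt) :=
    ((Set.finite_range pt).injOn_iff_bijOn_of_mapsTo hT).mp Ψ.injective.injOn
  by_cases hx : x ∈ Set.range pt
  · obtain ⟨s, hs⟩ := hT hx
    obtain ⟨t, rfl⟩ := hx
    rw [← hs]
    rfl
  · have hΨx : Ψ x ∉ Set.range pt := by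
      rwa [← hbij.image_eq, Ψ.injective.mem_set_image]
    exact_mod_cast (height_eq_rank hΨx).symm.trans
      ((Order.height_orderIso Ψ x).trans (height_eq_rank hx))

theorem exists_map_up_eq (hT : Set.MapsTo Ψ (Set.range pt) (Set.range pt)) (i : Fin n) :
    ∃ k, Ψ (up i) = up k := by
  have hr := rank_map hT (up i)
  cases h : Ψ (up i) with
  | up k => exact ⟨k, rfl⟩
  | _ => simp [h, rank] at hr

theorem exists_map_cell_eq (hT : Set.MapsTo Ψ (Set.range pt) (Set.range pt))
    (μ : Restr n G 𝓑) (j : μ.1.1) : ∃ κ k, Ψ (cell μ j) = cell κ k := by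
  have hr := rank_map hT (cell μ j)
  cases h : Ψ (cell μ j) with
  | cell κ k => exact ⟨κ, k, rfl⟩
  | _ => simp [h, rank] at hr

theorem exists_map_low_eq (hT : Set.MapsTo Ψ (Set.range pt) (Set.range pt)) (i : Fin n) :
    ∃ k, Ψ (low i) = low k := by
  have hr := rank_map hT (low i)
  obtain ⟨k, hk⟩ := exists_map_up_eq hT i
  have hle : Ψ (low i) ≤ up k := hk ▸ Ψ.monotone (low_le_up_iff.mpr .rfl)
  cases h : Ψ (low i) with
  | low m => exact ⟨m, rfl⟩
  | grp θ => exact absurd (h ▸ hle) not_grp_le_up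
  | _ => simp [h, rank] at hr

theorem map_up (hT : Set.MapsTo Ψ (Set.range pt) (Set.range pt)) (i : Fin n) :
    Ψ (up i) = up i := by
  choose p hp using exists_map_up_eq hT
  choose q hq using exists_map_low_eq hT
  have p_inj : Function.Injective p := fun a b hab => up.inj (Ψ.injective (by rw [hp, hp, hab]))
  have q_inj : Function.Injective q := fun a b hab => low.inj (Ψ.injective (by rw [hq, hq, hab]))
  have map_wcovBy (a b : Fin n) (hab : a ⩿ b) : p a ⩿ q b := by
    rwa [← low_le_up_iff (G := G) (𝓑 := 𝓑), ← hp, ← hq, Ψ.le_iff_le, low_le_up_iff]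
  rw [hp, eq_id_of_wcovBy p_inj q_inj map_wcovBy, id]

theorem exists_map_grp_eq (hT : Set.MapsTo Ψ (Set.range pt) (Set.range pt)) (θ : G) :
    ∃ θ', Ψ (grp θ) = grp θ' := by
  have hr := rank_map hT (grp θ)
  cases h : Ψ (grp θ) with
  | grp θ' => exact ⟨θ', rfl⟩
  | low m =>
    have hle : Ψ (grp θ) ≤ Ψ (up m) := by
      simp [h, map_up hT, low_le_up_iff]
    exact absurd (Ψ.le_iff_le.mp hle) not_grp_le_up
  | _ => simp [h, rank] at hr

theorem map_cell (hT : Set.MapsTo Ψ (Set.range pt) (Set.range pt))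
    (h𝓑 : 𝓑.PairwiseDisjoint id) {θ θ' : G} (hθ : Ψ (grp θ) = grp θ') {μ : Restr n G 𝓑}
    (hμ : ∀ x : μ.1.1, μ.1.2 x = θ.1 x.1) (j : μ.1.1) :
    Ψ (cell μ j) = cell (Restr.restrict θ' μ.2.1) j := by
  obtain ⟨κ, k, hk⟩ := exists_map_cell_eq hT μ j
  have hjk : j.1 = k.1 := by
    rw [← up_le_cell_iff, ← hk, ← map_up hT, Ψ.le_iff_le, up_le_cell_iff]
  have hκ : ∀ x : κ.1.1, κ.1.2 x = θ'.1 x.1 := by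
    rwa [← grp_le_cell_iff (j := k), ← hk, ← hθ, Ψ.le_iff_le, grp_le_cell_iff]
  have hdom : κ.1.1 = μ.1.1 := h𝓑.elim_set κ.2.1 μ.2.1 j.1 (hjk ▸ k.2) j.2
  rw [hk]
  obtain ⟨⟨C, f⟩, _⟩ := κ
  obtain rfl : C = μ.1.1 := hdom
  obtain rfl : f = fun x => θ'.1 x.1 := funext hκ
  obtain rfl : j = k := Subtype.ext hjk
  rfl

end Automorphism

end UPt

theorem automorphism_maps_cells_general (h𝓑 : 𝓑.PairwiseDisjoint id)
    (Ψ : UPt n G 𝓑 ≃o UPt n G 𝓑) (σ : Fin n → Fin n)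
    (hσ : ∀ j : Fin n, Ψ (UPt.pt j) = UPt.pt (σ j)) (μ : Restr n G 𝓑) :
    ∃ ν : Restr n G 𝓑, ∃ h : μ.1.1 = ν.1.1,
      (∀ x : μ.1.1, ν.1.2 ⟨x.1, h ▸ x.2⟩ = σ (μ.1.2 x)) ∧
      (∀ j : μ.1.1, Ψ (UPt.cell μ j) = UPt.cell ν ⟨j.1, h ▸ j.2⟩) ∧
      Ψ '' {x : UPt n G 𝓑 | ∃ j : μ.1.1, x = UPt.cell μ j} =
        {x : UPt n G 𝓑 | ∃ j : ν.1.1, x = UPt.cell ν j} := by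
  have hT : Set.MapsTo Ψ (Set.range UPt.pt) (Set.range UPt.pt) :=
    Set.forall_mem_range.mpr fun j => ⟨σ j, (hσ j).symm⟩
  obtain ⟨θ, hμ⟩ := Restr.exists_forall_eq μ
  obtain ⟨θ', hθ⟩ := UPt.exists_map_grp_eq hT θ
  have hcell := UPt.map_cell hT h𝓑 hθ hμ
  refine ⟨Restr.restrict θ' μ.2.1, rfl, fun x => ?_, hcell, ?_⟩
  · have hle : Ψ (UPt.cell μ x) ≤ Ψ (UPt.pt (μ.1.2 x)) :=
      Ψ.monotone (UPt.cell_le_pt_iff.mpr rfl)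
    rw [hcell, hσ] at hle
    exact UPt.cell_le_pt_iff.mp hle
  · ext y
    constructor
    · rintro ⟨_, ⟨j, rfl⟩, rfl⟩
      exact ⟨j, hcell j⟩
    · rintro ⟨j, rfl⟩
      exact ⟨_, ⟨j, rfl⟩, hcell j⟩

end

/-- If `Ψ` is an order-automorphism of `U_{G⋌𝓑}` whose action on `T` is the
map `σ` (i.e. `σ = Ψ|_T`), then for every `μ ∈ ⋃_{B∈𝓑} G|_B` there is `ν = σ∘μ` in
`⋃_{B∈𝓑} G|_B` (same domain, values composed with `σ`) such that `Ψ` maps `D^μ` onto `D^ν`,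
and pointwise `Ψ(j,μ) = (j, σ∘μ)`. -/
theorem automorphism_maps_cells (n : ℕ) (hn : 1 ≤ n) (G : Subgroup (Equiv.Perm (Fin n)))
    (P : BlockPartition n G) (Ψ : UPt n G P.blocks ≃o UPt n G P.blocks)
    (σ : Fin n → Fin n) (hσ : ∀ j : Fin n, Ψ (UPt.pt j) = UPt.pt (σ j)) :
    ∀ μ : Restr n G P.blocks,
      ∃ ν : Restr n G P.blocks, ∃ h : μ.1.1 = ν.1.1,
        (∀ x : μ.1.1, ν.1.2 ⟨x.1, h ▸ x.2⟩ = σ (μ.1.2 x)) ∧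
        (∀ j : μ.1.1, Ψ (UPt.cell μ j) = UPt.cell ν ⟨j.1, h ▸ j.2⟩) ∧
        (⇑Ψ) '' {x : UPt n G P.blocks | ∃ j : μ.1.1, x = UPt.cell μ j} =
          {x : UPt n G P.blocks | ∃ j : ν.1.1, x = UPt.cell ν j} :=
  automorphism_maps_cells_general P.pairwiseDisjoint_blocks Ψ σ hσ
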